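/- A gap in the consistency filtration forces a nonvanishing homotopy group. Precisely: let α_1,…,α_n be nonzero linear forms on ℝ^ℓ with ⋂_{i=1}^n ker α_i = {0}, and for 1 ≤ m ≤ ℓ let Σ_m denote the set of sign vectors ε ∈ {+1,−1}^n such that h(ε) is consistent at every X ∈ L(A) with codim X ≤ m. If for some k ≥ 2 there exists ε ∈ Σ_k ∖ Σ_{k+1}, then π_k(M(A), x_0) is nontrivial (for any basepoint x_0 ∈ M(A)). -/

import Mathlib

noncomputable section

/-- Real vector space `ℝ^ℓ`. -/
abbrev Vsp (ℓ : ℕ) : Type := EuclideanSpace ℝ (Fin ℓ)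

/-- The intersection `X = ⋂ i ∈ I, ker (α i)` as a submodule. -/
def interKer {ℓ n : ℕ} (α : Fin n → (Vsp ℓ →ₗ[ℝ] ℝ)) (I : Finset (Fin n)) :
    Submodule ℝ (Vsp ℓ) :=
  ⨅ i ∈ I, LinearMap.ker (α i)

/-- The system of half-spaces determined by `ε` is consistent at the intersection
`X = ⋂ i ∈ I, ker (α i)`: the intersection of the half-spaces of all hyperplanes
containing `X` is nonempty. -/
def ConsistentAt {ℓ n : ℕ} (α : Fin n → (Vsp ℓ →ₗ[ℝ] ℝ)) (ε : Fin n → ℝ)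
    (I : Finset (Fin n)) : Prop :=
  {x : Vsp ℓ | ∀ j : Fin n, interKer α I ≤ LinearMap.ker (α j) →
      0 < ε j * α j x}.Nonempty

/-- `Σ_m`: the set of sign vectors whose system of half-spaces is consistent at every
intersection of codimension at most `m`. -/
def SigmaFilt {n : ℕ} (ℓ : ℕ) (α : Fin n → (Vsp ℓ →ₗ[ℝ] ℝ)) (m : ℕ) :
    Set (Fin n → ℝ) :=
  {ε | (∀ i, ε i = 1 ∨ ε i = -1) ∧ ∀ I : Finset (Fin n),
    ℓ - Module.finrank ℝ (interKer α I) ≤ m → ConsistentAt α ε I}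

/-- The point `x + √-1 · v` of `ℂ^ℓ` determined by the real vectors `x, v`. -/
def cplx {ℓ : ℕ} (x v : Vsp ℓ) : Fin ℓ → ℂ :=
  fun j => (x j : ℂ) + Complex.I * (v j : ℂ)

/-- The `ℂ`-linear extension of a real linear form, evaluated at `z ∈ ℂ^ℓ`. -/
def cLin {ℓ : ℕ} (α : Vsp ℓ →ₗ[ℝ] ℝ) (z : Fin ℓ → ℂ) : ℂ :=
  (α (WithLp.toLp 2 (fun j => (z j).re)) : ℂ) + Complex.I * (α (WithLp.toLp 2 (fun j => (z j).im)) : ℂ)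

/-- The complexified complement `M(A) ⊆ ℂ^ℓ`. -/
def MA {ℓ n : ℕ} (α : Fin n → (Vsp ℓ →ₗ[ℝ] ℝ)) : Set (Fin ℓ → ℂ) :=
  {z | ∀ i, cLin (α i) z ≠ 0}


section helpers
open MeasureTheory Metric Set

/-- Lagrange interpolation for determinants of `1 + t M`. -/
lemma det_interp (m : ℕ) (t₀ : ℝ) (ht₀ : 0 < t₀) :
    ∃ (t c : Fin (m + 1) → ℝ), (∀ i, 0 < t i ∧ t i < t₀) ∧
      ∀ M : Matrix (Fin m) (Fin m) ℝ,
        (1 + M).det = ∑ i, c i * (1 + t i • M).det := by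
  classical
  let t : Fin (m + 1) → ℝ := fun i => t₀ * ((i : ℝ) + 1) / (m + 2)
  have hm : (0 : ℝ) < m + 2 := by positivity
  have htinj : Function.Injective t := by
    intro i j h
    simp only [t] at h
    have h3 : (i : ℝ) + 1 = (j : ℝ) + 1 := by
      field_simp at h
      exact h
    exact Fin.ext (by exact_mod_cast (add_right_cancel h3))
  refine ⟨t, fun i => (Lagrange.basis Finset.univ t i).eval 1, ?_, ?_⟩
  · intro i
    have hi : (i : ℝ) + 1 ≤ m + 1 := by
      have := i.2
      have h : (i : ℕ) + 1 ≤ m + 1 := this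
      exact_mod_cast h
    refine ⟨by positivity, ?_⟩
    simp only [t]
    rw [div_lt_iff₀ hm]
    nlinarith
  · intro M
    let p : Polynomial ℝ := (((Polynomial.X : Polynomial ℝ) • M.map Polynomial.C +
      (1 : Matrix (Fin m) (Fin m) ℝ).map Polynomial.C).det)
    have hp : ∀ s : ℝ, p.eval s = (1 + s • M).det := by
      intro s
      simp only [p]
      rw [← Polynomial.coe_evalRingHom, RingHom.map_det]
      congr 1
      ext i j
      by_cases hij : i = j <;> simp [Matrix.map_apply, Matrix.one_apply, hij] <;> ring
    have hdeg : p.degree < (Finset.univ : Finset (Fin (m + 1))).card := by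
      have h1 : p.natDegree ≤ m := by
        have := Polynomial.natDegree_det_X_add_C_le M (1 : Matrix (Fin m) (Fin m) ℝ)
        rwa [Fintype.card_fin] at this
      refine lt_of_le_of_lt Polynomial.degree_le_natDegree ?_
      simp only [Finset.card_univ, Fintype.card_fin]
      exact_mod_cast Nat.lt_succ_of_le h1
    have h := Lagrange.eq_interpolate (s := Finset.univ) (v := t) (f := p) htinj.injOn hdeg
    have h1 := congrArg (Polynomial.eval 1) h
    rw [Lagrange.interpolate_apply, Polynomial.eval_finsetSum, hp] at h1
    simp only [one_smul, Polynomial.eval_mul, Polynomial.eval_C, hp] at h1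
    rw [h1]
    exact Finset.sum_congr rfl fun i _ => mul_comm _ _

/-- Operator version. -/
lemma det_interp_op (m : ℕ) (t₀ : ℝ) (ht₀ : 0 < t₀) :
    ∃ (t c : Fin (m + 1) → ℝ), (∀ i, 0 < t i ∧ t i < t₀) ∧
      ∀ A : EuclideanSpace ℝ (Fin m) →L[ℝ] EuclideanSpace ℝ (Fin m),
        (ContinuousLinearMap.id ℝ _ + A).det
          = ∑ i, c i * (ContinuousLinearMap.id ℝ _ + t i • A).det := by
  obtain ⟨t, c, ht, h⟩ := det_interp m t₀ ht₀
  refine ⟨t, c, ht, fun A => ?_⟩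
  let b := (EuclideanSpace.basisFun (Fin m) ℝ).toBasis
  have key : ∀ s : ℝ, (ContinuousLinearMap.id ℝ (EuclideanSpace ℝ (Fin m)) + s • A).det
      = (1 + s • LinearMap.toMatrix b b (A : _ →ₗ[ℝ] _)).det := by
    intro s
    rw [ContinuousLinearMap.det, ← LinearMap.det_toMatrix b]
    congr 1
    simp
  have h1 := key 1
  simp only [one_smul] at h1
  rw [h1, h]
  simp only [key]

lemma radial_lip {E : Type*} [NormedAddCommGroup E] [NormedSpace ℝ E] (x y : E) :
    ‖(max 1 ‖x‖)⁻¹ • x - (max 1 ‖y‖)⁻¹ • y‖ ≤ 2 * ‖x - y‖ := by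
  set a := max 1 ‖x‖ with ha
  set b := max 1 ‖y‖ with hb
  have ha1 : 1 ≤ a := le_max_left _ _
  have hb1 : 1 ≤ b := le_max_left _ _
  have hyb : ‖y‖ ≤ b := le_max_right _ _
  have hab : |b - a| ≤ ‖x - y‖ := by
    have h1 : |b - a| ≤ |‖y‖ - ‖x‖| := by
      rw [ha, hb, max_comm 1, max_comm 1]
      exact abs_max_sub_max_le_abs _ _ _
    refine h1.trans ?_
    rw [norm_sub_rev]
    exact abs_norm_sub_norm_le y x
  have e : a⁻¹ • x - b⁻¹ • y = a⁻¹ • (x - y) + (a⁻¹ - b⁻¹) • y := by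
    rw [smul_sub, sub_smul]; abel
  rw [e]
  refine (norm_add_le _ _).trans ?_
  rw [norm_smul, norm_smul, Real.norm_eq_abs, Real.norm_eq_abs]
  have h1 : |a⁻¹| ≤ 1 := by
    rw [abs_of_pos (by positivity)]
    exact inv_le_one_of_one_le₀ ha1
  have h2 : |a⁻¹ - b⁻¹| * ‖y‖ ≤ ‖x - y‖ := by
    have : a⁻¹ - b⁻¹ = (b - a) / (a * b) := by field_simp
    rw [this, abs_div, abs_of_pos (show 0 < a * b by positivity), div_mul_eq_mul_div,
      div_le_iff₀ (by positivity)]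
    calc |b - a| * ‖y‖ ≤ ‖x - y‖ * b := by gcongr
      _ ≤ ‖x - y‖ * (a * b) := by
        have : b ≤ a * b := by nlinarith
        gcongr
  nlinarith [norm_nonneg (x - y)]

lemma perturb_bij {E : Type*} [NormedAddCommGroup E] [NormedSpace ℝ E] [CompleteSpace E]
    (k : E → E) (K t : ℝ) (ht : 0 ≤ t) (hK0 : 0 ≤ K) (hK : ∀ x y, ‖k x - k y‖ ≤ K * ‖x - y‖)
    (htK : t * K < 1) : Function.Bijective (fun x => x + t • k x) := by
  constructor
  · intro x y h
    simp only at h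
    have h1 : x - y = t • (k y - k x) := by
      rw [smul_sub, sub_eq_sub_iff_add_eq_add, h]; abel
    by_contra hne
    have hpos : 0 < ‖x - y‖ := norm_pos_iff.2 (sub_ne_zero.2 hne)
    have h2 : ‖x - y‖ ≤ t * (K * ‖x - y‖) := by
      conv_lhs => rw [h1, norm_smul, Real.norm_eq_abs, abs_of_nonneg ht, norm_sub_rev]
      gcongr
      exact hK x y
    nlinarith
  · intro y
    have hc : ContractingWith ⟨t * K, by positivity⟩ (fun x => y - t • k x) := by
      refine ⟨by exact_mod_cast htK, LipschitzWith.of_dist_le_mul fun a b => ?_⟩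
      rw [dist_eq_norm, dist_eq_norm]
      have : y - t • k a - (y - t • k b) = t • (k b - k a) := by rw [smul_sub]; abel
      rw [this, norm_smul, Real.norm_eq_abs, abs_of_nonneg ht, norm_sub_rev]
      have := mul_le_mul_of_nonneg_left (hK a b) ht
      rw [← mul_assoc] at this
      exact this
    refine ⟨hc.fixedPoint, ?_⟩
    have := hc.fixedPoint_isFixedPt
    simp only [Function.IsFixedPt] at this
    simp only
    nth_rewrite 1 [← this]
    abel

lemma det_pos_of_small {E : Type*} [NormedAddCommGroup E] [NormedSpace ℝ E]
    [FiniteDimensional ℝ E] (A : E →L[ℝ] E) (t : ℝ) (ht : 0 ≤ t) (h : t * ‖A‖ < 1) :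
    0 < (ContinuousLinearMap.id ℝ E + t • A).det := by
  have hne : ∀ s ∈ Icc 0 t, (ContinuousLinearMap.id ℝ E + s • A).det ≠ 0 := by
    intro s hs h0
    have := LinearMap.bot_lt_ker_of_det_eq_zero (f := ((ContinuousLinearMap.id ℝ E + s • A : E →L[ℝ] E) : E →ₗ[ℝ] E)) h0
    obtain ⟨v, hv, hv0⟩ := Submodule.exists_mem_ne_zero_of_ne_bot this.ne'
    have hv1 : v + s • A v = 0 := by simpa using hv
    have h1 : ‖v‖ = s * ‖A v‖ := by
      rw [eq_neg_of_add_eq_zero_left hv1, norm_neg, norm_smul, Real.norm_eq_abs,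
        abs_of_nonneg hs.1]
      congr 2
      rw [← eq_neg_of_add_eq_zero_left hv1]
    have h2 := A.le_opNorm v
    have hpos : 0 < ‖v‖ := norm_pos_iff.2 hv0
    have h3 : s * ‖A v‖ ≤ t * (‖A‖ * ‖v‖) := by
      apply mul_le_mul hs.2 h2 (norm_nonneg _) ht
    nlinarith
  by_contra hneg
  push Not at hneg
  have hcont : ContinuousOn (fun s : ℝ => (ContinuousLinearMap.id ℝ E + s • A).det) (Icc 0 t) := by
    apply Continuous.continuousOn
    exact ContinuousLinearMap.continuous_det.comp (by fun_prop)
  have := intermediate_value_Icc' ht hcont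
  have h0 : (0 : ℝ) ∈ Icc ((ContinuousLinearMap.id ℝ E + t • A).det)
      ((ContinuousLinearMap.id ℝ E + (0:ℝ) • A).det) := by
    refine ⟨hneg, ?_⟩
    simp [ContinuousLinearMap.det]
  obtain ⟨s, hs, hs0⟩ := this h0
  exact hne s hs hs0

lemma no_smooth_retraction (m : ℕ)
    (r : EuclideanSpace ℝ (Fin m) → EuclideanSpace ℝ (Fin m)) (hr : ContDiff ℝ 1 r)
    (hr1 : ∀ x, ‖r x‖ = 1) (hrs : ∀ x, ‖x‖ = 1 → r x = x) : False := by
  let h : (EuclideanSpace ℝ (Fin m)) → (EuclideanSpace ℝ (Fin m)) := fun x => r x - x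
  have hh : ContDiff ℝ 1 h := hr.sub contDiff_id
  obtain ⟨K, hK⟩ := (hh.contDiffOn (s := closedBall (0:(EuclideanSpace ℝ (Fin m))) 1)).exists_lipschitzOnWith one_ne_zero
    (convex_closedBall _ _) (isCompact_closedBall _ _)
  let ρ : (EuclideanSpace ℝ (Fin m)) → (EuclideanSpace ℝ (Fin m)) := fun x => (max 1 ‖x‖)⁻¹ • x
  have hρmem : ∀ x, ρ x ∈ closedBall (0:(EuclideanSpace ℝ (Fin m))) 1 := by
    intro x
    simp only [ρ, mem_closedBall, dist_zero_right, norm_smul, norm_inv, Real.norm_eq_abs]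
    have : 0 < max 1 ‖x‖ := by positivity
    rw [abs_of_pos this, inv_mul_le_iff₀ this]
    simp
  have hρin : ∀ x, ‖x‖ ≤ 1 → ρ x = x := by
    intro x hx
    simp [ρ, max_eq_left hx]
  have hρout : ∀ x, 1 ≤ ‖x‖ → h (ρ x) = 0 := by
    intro x hx
    have : ‖ρ x‖ = 1 := by
      simp only [ρ, max_eq_right hx, norm_smul, norm_inv, norm_norm]
      have : (0:ℝ) < ‖x‖ := by linarith
      exact inv_mul_cancel₀ (by positivity)
    simp [h, hrs _ this]
  have hLip : ∀ x y, ‖h (ρ x) - h (ρ y)‖ ≤ (2 * K) * ‖x - y‖ := by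
    intro x y
    have h1 := hK.norm_sub_le (hρmem x) (hρmem y)
    have h2 := radial_lip x y
    calc _ ≤ _ := h1
      _ ≤ K * (2 * ‖x - y‖) := by gcongr
      _ = _ := by ring
  let t₀ : ℝ := (2 * K + 1)⁻¹
  have hKK : (0:ℝ) ≤ K := K.2
  have ht₀ : 0 < t₀ := by positivity
  have hsmall : ∀ t, 0 < t → t < t₀ → t * (2 * K) < 1 := by
    intro t ht htt
    have : t * (2 * K + 1) < 1 := by
      rwa [← lt_div_iff₀ (by positivity), one_div]
    nlinarith
  obtain ⟨t, c, ht, hdet⟩ := det_interp_op m t₀ ht₀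
  let U := ball (0:(EuclideanSpace ℝ (Fin m))) 1
  have hd : ∀ x, HasFDerivAt h (fderiv ℝ h x) x := fun x =>
    (hh.differentiable one_ne_zero x).hasFDerivAt
  have hcont : Continuous (fderiv ℝ h) := hh.continuous_fderiv one_ne_zero
  have hI : ∀ s : ℝ, Continuous (fun x => (ContinuousLinearMap.id ℝ (EuclideanSpace ℝ (Fin m)) + s • fderiv ℝ h x).det) := by
    intro s
    exact ContinuousLinearMap.continuous_det.comp (by fun_prop)
  have hInt : ∀ s : ℝ, IntegrableOn
      (fun x => (ContinuousLinearMap.id ℝ (EuclideanSpace ℝ (Fin m)) + s • fderiv ℝ h x).det) U volume := by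
    intro s
    exact ((hI s).continuousOn.integrableOn_compact (isCompact_closedBall (0:(EuclideanSpace ℝ (Fin m))) 1)).mono_set
      ball_subset_closedBall
  have hvol : ∀ s, 0 < s → s < t₀ →
      ∫ x in U, (ContinuousLinearMap.id ℝ (EuclideanSpace ℝ (Fin m)) + s • fderiv ℝ h x).det = volume.real U := by
    intro s hs hs0
    have hbij := perturb_bij (fun x => h (ρ x)) (2 * K) s hs.le (by positivity) hLip
      (hsmall s hs hs0)
    set f : (EuclideanSpace ℝ (Fin m)) → (EuclideanSpace ℝ (Fin m)) := fun x => x + s • h (ρ x) with hf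
    have hfout : ∀ x, 1 ≤ ‖x‖ → f x = x := by
      intro x hx
      simp [hf, hρout x hx]
    have himg : f '' U = U := by
      ext y
      constructor
      · rintro ⟨x, hx, rfl⟩
        by_contra hy
        have hy' : 1 ≤ ‖f x‖ := by simpa [U] using hy
        have := hbij.1 (hfout _ hy')
        have hx' : ‖x‖ < 1 := by simpa [U] using hx
        rw [this] at hy'
        linarith
      · intro hy
        obtain ⟨x, rfl⟩ := hbij.2 y
        refine ⟨x, ?_, rfl⟩
        by_contra hx
        have hx' : 1 ≤ ‖x‖ := by simpa [U] using hx
        rw [hfout x hx'] at hy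
        exact hx hy
    have hder : ∀ x ∈ U, HasFDerivWithinAt f (ContinuousLinearMap.id ℝ (EuclideanSpace ℝ (Fin m)) + s • fderiv ℝ h x) U x := by
      intro x hx
      have h1 : HasFDerivAt (fun x => x + s • h x)
          (ContinuousLinearMap.id ℝ (EuclideanSpace ℝ (Fin m)) + s • fderiv ℝ h x) x :=
        (hasFDerivAt_id x).add ((hd x).const_smul s)
      refine (h1.hasFDerivWithinAt).congr ?_ ?_
      · intro y hy
        have : ‖y‖ ≤ 1 := by
          have : ‖y‖ < 1 := by simpa [U] using hy
          exact this.le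
        simp [hf, hρin y this]
      · have : ‖x‖ ≤ 1 := by
          have : ‖x‖ < 1 := by simpa [U] using hx
          exact this.le
        simp [hf, hρin x this]
    have hl := lintegral_abs_det_fderiv_eq_addHaar_image volume (measurableSet_ball) hder
      hbij.1.injOn
    rw [himg] at hl
    have hpos : ∀ x ∈ U, 0 < (ContinuousLinearMap.id ℝ (EuclideanSpace ℝ (Fin m)) + s • fderiv ℝ h x).det := by
      intro x hx
      apply det_pos_of_small _ _ hs.le
      have hb : ‖fderiv ℝ h x‖ ≤ K := norm_fderiv_le_of_lipschitzOn ℝ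
        (s := closedBall (0:(EuclideanSpace ℝ (Fin m))) 1)
        (Filter.mem_of_superset (isOpen_ball.mem_nhds hx) ball_subset_closedBall) hK
      have := hsmall s hs hs0
      nlinarith
    rw [integral_eq_lintegral_of_nonneg_ae]
    · rw [Measure.real, ← hl]
      congr 1
      refine setLIntegral_congr_fun measurableSet_ball ?_
      intro x hx
      simp only
      rw [abs_of_pos (hpos x hx)]
    · filter_upwards [ae_restrict_mem measurableSet_ball] with x hx
      exact (hpos x hx).le
    · exact (hI s).aestronglyMeasurable
  have hsum : ∑ i, c i = 1 := by
    have := hdet 0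
    simp [ContinuousLinearMap.det] at this
    exact this.symm
  have htot : ∫ x in U, (ContinuousLinearMap.id ℝ (EuclideanSpace ℝ (Fin m)) + fderiv ℝ h x).det = volume.real U := by
    rw [show (fun x => (ContinuousLinearMap.id ℝ (EuclideanSpace ℝ (Fin m)) + fderiv ℝ h x).det) = _ from
      funext fun x => hdet (fderiv ℝ h x)]
    rw [integral_finsetSum]
    · simp_rw [integral_const_mul]
      rw [Finset.sum_congr rfl fun i _ => by rw [hvol (t i) (ht i).1 (ht i).2],
        ← Finset.sum_mul, hsum, one_mul]
    · intro i _
      exact (hInt (t i)).const_mul (c i)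
  have hzero : ∀ x, (ContinuousLinearMap.id ℝ (EuclideanSpace ℝ (Fin m)) + fderiv ℝ h x).det = 0 := by
    intro x
    by_contra hne
    have hrd : HasFDerivAt r (ContinuousLinearMap.id ℝ (EuclideanSpace ℝ (Fin m)) + fderiv ℝ h x) x := by
      have := (hasFDerivAt_id x).add (hd x)
      refine this.congr_of_eventuallyEq (Filter.Eventually.of_forall fun y => ?_)
      simp [h]
    have hin : HasFDerivAt (fun y => inner ℝ (r y) (r y)) _ x := hrd.inner ℝ hrd
    have hc : (fun y => inner ℝ (r y) (r y)) = fun _ => (1:ℝ) := by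
      ext y
      rw [real_inner_self_eq_norm_sq, hr1]; norm_num
    rw [hc] at hin
    have hu := hin.unique (hasFDerivAt_const (1:ℝ) x)
    have hsurj : Function.Surjective (ContinuousLinearMap.id ℝ (EuclideanSpace ℝ (Fin m)) + fderiv ℝ h x) := by
      exact (LinearMap.equivOfDetNeZero ((ContinuousLinearMap.id ℝ (EuclideanSpace ℝ (Fin m)) + fderiv ℝ h x : (EuclideanSpace ℝ (Fin m)) →L[ℝ] (EuclideanSpace ℝ (Fin m))) : (EuclideanSpace ℝ (Fin m)) →ₗ[ℝ] (EuclideanSpace ℝ (Fin m))) hne).surjective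
    obtain ⟨v, hv⟩ := hsurj (r x)
    have := congrArg (fun L => L v) hu
    simp only [ContinuousLinearMap.comp_apply, ContinuousLinearMap.prod_apply, fderivInnerCLM_apply, hv, zero_apply] at this
    rw [real_inner_self_eq_norm_sq, hr1] at this
    norm_num at this
  simp_rw [hzero] at htot
  simp only [integral_zero] at htot
  have : 0 < volume.real U := by
    apply ENNReal.toReal_pos
    · exact (measure_ball_pos volume (0:(EuclideanSpace ℝ (Fin m))) one_pos).ne'
    · exact measure_ball_lt_top.ne
  linarith

lemma no_ext_euclid (m : ℕ)
    (F : EuclideanSpace ℝ (Fin m) → EuclideanSpace ℝ (Fin m)) (hF : Continuous F)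
    (hne : ∀ x, F x ≠ 0) (R : ℝ) (hR : ∀ x, R ≤ ‖x‖ → F x = x) : False := by
  obtain ⟨R', hR'0, hR'⟩ : ∃ R' : ℝ, 0 < R' ∧ R ≤ R' := ⟨max 1 R, by positivity, le_max_right _ _⟩
  obtain ⟨g, hg, hgd, hgS, -⟩ := hF.exists_contDiff_approx_and_eqOn 1 (ε := fun x => ‖F x‖)
    hF.norm (fun x => norm_pos_iff.2 (hne x)) (S := {x | 2 * R' ≤ ‖x‖}) (U := {x | R' < ‖x‖})
    (isClosed_le continuous_const continuous_norm)
    ((isOpen_lt continuous_const continuous_norm).mem_nhdsSet.2 (by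
      intro x hx
      simp only [mem_ofPred_eq] at hx ⊢
      linarith))
    (contDiffOn_id.congr (fun x hx => by
      simp only [mem_ofPred_eq] at hx
      simp [hR x (by linarith)]))
  have hg0 : ∀ x, g x ≠ 0 := by
    intro x h0
    have := hgd x
    rw [h0, dist_zero_left] at this
    exact lt_irrefl _ this
  have hg1 : ContDiff ℝ 1 (fun x => g ((2 * R') • x)) := hg.comp (contDiff_const_smul (2 * R'))
  refine no_smooth_retraction m (fun x => ‖g ((2 * R') • x)‖⁻¹ • g ((2 * R') • x)) ?_ ?_ ?_
  · exact ((hg1.norm ℝ fun x => hg0 _).inv fun x => norm_ne_zero_iff.2 (hg0 _)).smul hg1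
  · intro x
    rw [norm_smul, norm_inv, norm_norm]
    exact inv_mul_cancel₀ (norm_ne_zero_iff.2 (hg0 _))
  · intro x hx
    have hn : ‖(2 * R') • x‖ = 2 * R' := by
      rw [norm_smul, hx, mul_one, Real.norm_eq_abs, abs_of_pos (by positivity)]
    have : g ((2 * R') • x) = (2 * R') • x := by
      rw [hgS (by simp [hn]), hR _ (by rw [hn]; linarith)]
    simp only [this, hn, smul_smul]
    rw [inv_mul_cancel₀ (by positivity), one_smul]

lemma no_ext {W : Type*} [NormedAddCommGroup W] [NormedSpace ℝ W] [FiniteDimensional ℝ W]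
    (F : W → W) (hF : Continuous F)
    (hne : ∀ x, F x ≠ 0) (R : ℝ) (hR : ∀ x, R ≤ ‖x‖ → F x = x) : False := by
  let e : W ≃L[ℝ] EuclideanSpace ℝ (Fin (Module.finrank ℝ W)) :=
    ContinuousLinearEquiv.ofFinrankEq (by simp)
  have hR' : ∀ x, R * ‖(e : W →L[ℝ] EuclideanSpace ℝ (Fin (Module.finrank ℝ W)))‖ + 1 ≤ ‖x‖ → e (F (e.symm x)) = x := by
    intro x hx
    rw [hR, e.apply_symm_apply]
    have h1 : ‖x‖ ≤ ‖(e : W →L[ℝ] EuclideanSpace ℝ (Fin (Module.finrank ℝ W)))‖ * ‖e.symm x‖ := by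
      have := (e : W →L[ℝ] EuclideanSpace ℝ (Fin (Module.finrank ℝ W))).le_opNorm (e.symm x)
      simpa using this
    by_contra hlt
    push Not at hlt
    have := norm_nonneg (e : W →L[ℝ] EuclideanSpace ℝ (Fin (Module.finrank ℝ W)))
    nlinarith
  exact no_ext_euclid _ (fun x => e (F (e.symm x))) (by fun_prop) (fun x h => hne (e.symm x) (by simpa using h)) _ hR'

lemma no_chain {W : Type*} [NormedAddCommGroup W] [NormedSpace ℝ W] [FiniteDimensional ℝ W]
    (Θ Q : W → W) (hΘ : Continuous Θ) (hQ : Continuous Q) (hΘ0 : ∀ x, Θ x ≠ 0)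
    (h1 : ∀ x, ‖x‖ = 1 → ∀ t : ℝ, 0 ≤ t → t ≤ 1 → (1 - t) • Θ x + t • Q x ≠ 0)
    (h2 : ∀ x, ‖x‖ = 1 → ∀ t : ℝ, 0 ≤ t → t ≤ 1 → ∀ c : ℝ, 0 < c →
      (1 - t) • Q x + (t * c) • x ≠ 0) : False := by
  let ρ : W → W := fun x => (max 1 ‖x‖)⁻¹ • x
  have hρc : Continuous ρ := by
    refine Continuous.smul (Continuous.inv₀ (by fun_prop) ?_) continuous_id
    intro x
    have : 0 < max 1 ‖x‖ := by positivity
    exact this.ne'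
  have hρ1 : ∀ x, 1 ≤ ‖x‖ → ‖ρ x‖ = 1 := by
    intro x hx
    simp only [ρ, max_eq_right hx, norm_smul, norm_inv, norm_norm]
    exact inv_mul_cancel₀ (by positivity)
  have hρ2 : ∀ x, 1 ≤ ‖x‖ → x = ‖x‖ • ρ x := by
    intro x hx
    simp only [ρ, max_eq_right hx, smul_smul]
    rw [mul_inv_cancel₀ (by positivity), one_smul]
  let a : W → ℝ := fun x => max 0 (min 1 (‖x‖ - 1))
  let b : W → ℝ := fun x => max 0 (min 1 (‖x‖ - 2))
  have hac : Continuous a := by fun_prop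
  have hbc : Continuous b := by fun_prop
  refine no_ext (fun x => (1 - b x) • ((1 - a x) • Θ (ρ x) + a x • Q (ρ x)) + b x • x)
    (by fun_prop) ?_ 3 ?_
  · intro x
    have ha0 : 0 ≤ a x := le_max_left _ _
    have hb0 : 0 ≤ b x := le_max_left _ _
    have ha1 : a x ≤ 1 := max_le zero_le_one (min_le_left _ _)
    have hb1 : b x ≤ 1 := max_le zero_le_one (min_le_left _ _)
    rcases le_total ‖x‖ 1 with hx | hx
    · have ha : a x = 0 := max_eq_left ((min_le_right _ _).trans (by linarith))
      have hb : b x = 0 := max_eq_left ((min_le_right _ _).trans (by linarith))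
      simpa [ha, hb] using hΘ0 _
    rcases le_total ‖x‖ 2 with hx2 | hx2
    · have hb : b x = 0 := max_eq_left ((min_le_right _ _).trans (by linarith))
      simpa [hb] using h1 (ρ x) (hρ1 x hx) (a x) ha0 ha1
    · have ha : a x = 1 := by
        simp only [a]
        rw [min_eq_left (by linarith), max_eq_right zero_le_one]
      have := h2 (ρ x) (hρ1 x hx) (b x) hb0 hb1 ‖x‖ (by linarith)
      rw [mul_smul, ← hρ2 x hx] at this
      simpa [ha] using this
  · intro x hx
    have hb : b x = 1 := by
      simp only [b]
      rw [min_eq_left (by linarith), max_eq_right zero_le_one]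
    simp [hb]

lemma exists_log_lift {W : Type*} [NormedAddCommGroup W] [NormedSpace ℝ W]
    (f : W → ℂ) (hf : Continuous f) (h0 : ∀ x, f x ≠ 0) :
    ∃ u : W → ℂ, Continuous u ∧ ∀ x, Complex.exp (u x) = f x := by
  obtain ⟨u, _, hu2⟩ := Complex.isCoveringMapOn_exp.existsUnique_continuousMap_lifts
    (A := W) ⟨f, hf⟩ (a₀ := 0) (e₀ := Complex.log (f 0)) (Complex.exp_log (h0 0)) (fun x => h0 x)
    |>.exists
  exact ⟨u, u.continuous, fun x => congrFun hu2 x⟩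

lemma log_lift_const {W : Type*} [TopologicalSpace W] (S : Set W) (hS : IsPreconnected S)
    (f u : W → ℂ) (hf : Continuous f) (hu : Continuous u)
    (hexp : ∀ x, Complex.exp (u x) = f x)
    (hs : ∀ x ∈ S, f x ∈ Complex.slitPlane) :
    ∃ c : ℂ, Complex.exp c = 1 ∧ ∀ x ∈ S, u x - c = Complex.log (f x) := by
  rcases S.eq_empty_or_nonempty with rfl | ⟨x₀, hx₀⟩
  · exact ⟨0, by simp, by simp⟩
  have hne : f x₀ ≠ 0 := by rw [← hexp]; exact Complex.exp_ne_zero _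
  have hc : Complex.exp (u x₀ - Complex.log (f x₀)) = 1 := by
    rw [Complex.exp_sub, hexp, Complex.exp_log hne, div_self hne]
  refine ⟨u x₀ - Complex.log (f x₀), hc, ?_⟩
  have hli : IsLocallyInjective Complex.exp := by
    have h1 := Complex.isCoveringMap_exp.isLocalHomeomorph.isLocallyInjective
    intro x
    obtain ⟨U, hU, hx, hinj⟩ := h1 x
    refine ⟨U, hU, hx, fun a ha b hb hab => hinj ha hb (Subtype.ext hab)⟩
  have := (T2Space.isSeparatedMap Complex.exp).eqOn_of_comp_eqOn hli hS
    (g₁ := fun x => u x - (u x₀ - Complex.log (f x₀))) (g₂ := fun x => Complex.log (f x))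
    (by fun_prop) (hf.continuousOn.clog hs) (fun x hx => by
      have hne' : f x ≠ 0 := by rw [← hexp]; exact Complex.exp_ne_zero _
      simp only [Function.comp]
      rw [Complex.exp_sub, hc, hexp, Complex.exp_log hne', div_one]) hx₀ (by simp)
  exact this

lemma core_no_filling {W : Type*} [NormedAddCommGroup W] [NormedSpace ℝ W] [FiniteDimensional ℝ W]
    (hW : 1 < Module.finrank ℝ W) {C : Type*} [Fintype C] [Nonempty C]
    (L : W →ₗ[ℝ] (C → ℝ)) (π : (C → ℝ) →ₗ[ℝ] W) (hπL : ∀ w, π (L w) = w)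
    (hπ0 : ∀ θ, π θ = 0 → ∀ i j, θ i = θ j) (hLs : ∀ w, ∑ j, L w j = 0)
    (ω : W → C → ℂ) (hω : ∀ j, Continuous fun x => ω x j) (hω0 : ∀ x j, ω x j ≠ 0)
    (hωs : ∀ x, ∑ j, ω x j = 0)
    (Q : W → W) (hQ : Continuous Q)
    (h2 : ∀ x, ‖x‖ = 1 → ∀ t : ℝ, 0 ≤ t → t ≤ 1 → ∀ c : ℝ, 0 < c →
      (1 - t) • Q x + (t * c) • x ≠ 0)
    (hpos : ∀ x, ‖x‖ = 1 → ∀ j, 0 < L (Q x) j → (ω x j).im < 0)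
    (hneg : ∀ x, ‖x‖ = 1 → ∀ j, L (Q x) j < 0 → 0 < (ω x j).im)
    (hzero : ∀ x, ‖x‖ = 1 → ∀ j, L (Q x) j = 0 → 0 < (ω x j).re) : False := by
  have hslit : ∀ x, ‖x‖ = 1 → ∀ j, ω x j ∈ Complex.slitPlane := by
    intro x hx j
    rw [Complex.mem_slitPlane_iff]
    rcases lt_trichotomy (L (Q x) j) 0 with h | h | h
    · exact Or.inr (hneg x hx j h).ne'
    · exact Or.inl (hzero x hx j h)
    · exact Or.inr (hpos x hx j h).ne
  have hSc : IsPreconnected (sphere (0 : W) 1) := by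
    apply isPreconnected_sphere
    rw [← Module.finrank_eq_rank]
    exact_mod_cast hW
  have hex : ∀ j, ∃ u : W → ℂ, Continuous u ∧ (∀ x, Complex.exp (u x) = ω x j) ∧
      ∀ x, ‖x‖ = 1 → u x = Complex.log (ω x j) := by
    intro j
    obtain ⟨u, hu, hue⟩ := exists_log_lift (fun x => ω x j) (hω j) (fun x => hω0 x j)
    obtain ⟨c, hc, hcu⟩ := log_lift_const (sphere (0 : W) 1) hSc (fun x => ω x j) u (hω j) hu hue
      (fun x hx => hslit x (by simpa using hx) j)
    refine ⟨fun x => u x - c, by fun_prop, fun x => ?_, fun x hx => hcu x (by simpa using hx)⟩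
    rw [Complex.exp_sub, hc, hue, div_one]
  choose u hu hue hus using hex
  let θ : W → C → ℝ := fun x j => (u j x).im
  have hθc : Continuous θ := continuous_pi fun j => Complex.continuous_im.comp (hu j)
  have hθ0 : ∀ x, π (θ x) ≠ 0 := by
    intro x h0
    have hc := hπ0 _ h0
    obtain ⟨j₀⟩ := ‹Nonempty C›
    have hform : ∀ j, ω x j = (Real.exp (u j x).re : ℂ) * Complex.exp ((θ x j₀ : ℂ) * Complex.I) := by
      intro j
      rw [← hue j x, ← hc j j₀, Complex.ofReal_exp, ← Complex.exp_add, Complex.re_add_im]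
    have hs := hωs x
    simp_rw [hform] at hs
    rw [← Finset.sum_mul] at hs
    rcases mul_eq_zero.1 hs with h | h
    · have h' : ∑ j, Real.exp (u j x).re = 0 := by exact_mod_cast h
      have : 0 < ∑ j, Real.exp (u j x).re :=
        Finset.sum_pos (fun j _ => Real.exp_pos _) ⟨j₀, Finset.mem_univ _⟩
      linarith
    · exact Complex.exp_ne_zero _ h
  have hπc : Continuous π := π.continuous_of_finiteDimensional
  refine no_chain (fun x => - π (θ x)) Q (by fun_prop) hQ (fun x h => hθ0 x (by simpa using h)) ?_ h2
  intro x hx t ht0 ht1 h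
  have hQ0 : Q x ≠ 0 := by
    have := h2 x hx 0 le_rfl zero_le_one 1 one_pos
    simpa using this
  have hLQ : L (Q x) ≠ 0 := by
    intro h0
    apply hQ0
    rw [← hπL (Q x), h0, map_zero]
  have hπ : π ((1 - t) • θ x - t • L (Q x)) = 0 := by
    rw [map_sub, map_smul, map_smul, hπL]
    rw [smul_neg] at h
    rw [← neg_eq_zero, neg_sub, ← h]
    abel
  have hc := hπ0 _ hπ
  obtain ⟨i, hi⟩ : ∃ i, 0 < L (Q x) i := by
    by_contra hcon
    push Not at hcon
    apply hLQ
    ext j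
    exact (Finset.sum_eq_zero_iff_of_nonpos (fun j _ => hcon j)).1 (hLs (Q x)) j (Finset.mem_univ _)
  obtain ⟨i', hi'⟩ : ∃ i, L (Q x) i < 0 := by
    by_contra hcon
    push Not at hcon
    apply hLQ
    ext j
    exact (Finset.sum_eq_zero_iff_of_nonneg (fun j _ => hcon j)).1 (hLs (Q x)) j (Finset.mem_univ _)
  have h1 : θ x i < 0 := by
    simp only [θ]
    rw [hus i x hx, Complex.log_im]
    exact Complex.arg_neg_iff.2 (hpos x hx i hi)
  have h1' : 0 < θ x i' := by
    simp only [θ]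
    rw [hus i' x hx, Complex.log_im]
    have hp := hneg x hx i' hi'
    refine lt_of_le_of_ne (Complex.arg_nonneg_iff.2 hp.le) ?_
    intro h0
    have := (Complex.arg_eq_zero_iff.1 h0.symm).2
    linarith
  have := hc i i'
  simp only [Pi.sub_apply, Pi.smul_apply, smul_eq_mul] at this
  have e1 : (1 - t) * θ x i - t * L (Q x) i < 0 := by
    rcases eq_or_lt_of_le ht0 with h | h
    · rw [← h]; linarith
    · nlinarith
  have e2 : 0 < (1 - t) * θ x i' - t * L (Q x) i' := by
    rcases eq_or_lt_of_le ht0 with h | h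
    · rw [← h]; linarith
    · nlinarith
  linarith

/-- The model map on the bottom face. -/
noncomputable def Pmap {k : ℕ} (y : Fin k → ℝ) : ℝ × (Fin k → ℝ) :=
  (min (4 * ‖y‖ - 1) 1, max (1 - 2 * ‖y‖) 0 • y)

/-- The model map on the boundary of the cube. -/
noncomputable def Qmap {k : ℕ} (x : ℝ × (Fin k → ℝ)) : ℝ × (Fin k → ℝ) :=
  (min (4 * max ‖x.2‖ ((x.1 + 1) / 2) - 1) 1, max (1 - 2 * max ‖x.2‖ ((x.1 + 1) / 2)) 0 • x.2)

lemma Pmap_cont {k : ℕ} : Continuous (Pmap (k := k)) := by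
  unfold Pmap; fun_prop

lemma Qmap_cont {k : ℕ} : Continuous (Qmap (k := k)) := by
  unfold Qmap; fun_prop

lemma Pmap_far {k : ℕ} (y : Fin k → ℝ) (h : 1 / 2 ≤ ‖y‖) : Pmap y = (1, 0) := by
  unfold Pmap
  rw [min_eq_right (by linarith), max_eq_right (by linarith), zero_smul]

lemma Pmap_ne {k : ℕ} (y : Fin k → ℝ) : Pmap y ≠ 0 := by
  intro h
  unfold Pmap at h
  rw [Prod.mk_eq_zero] at h
  obtain ⟨h1, h2⟩ := h
  rcases smul_eq_zero.1 h2 with h | h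
  · have := max_eq_right_iff.1 h
    rw [min_eq_right (by linarith)] at h1
    norm_num at h1
  · rw [h, norm_zero] at h1
    norm_num at h1

lemma Qmap_bot {k : ℕ} (x : ℝ × (Fin k → ℝ)) (h : x.1 = -1) : Qmap x = Pmap x.2 := by
  unfold Qmap Pmap
  rw [h, max_eq_left (a := ‖x.2‖) (by norm_num)]

lemma Qmap_other {k : ℕ} (x : ℝ × (Fin k → ℝ)) (h : ‖x.2‖ = 1 ∨ x.1 = 1) : Qmap x = (1, 0) := by
  have : 1 ≤ max ‖x.2‖ ((x.1 + 1) / 2) := by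
    rcases h with h | h
    · exact le_max_of_le_left h.ge
    · exact le_max_of_le_right (by rw [h]; norm_num)
  unfold Qmap
  rw [min_eq_right (by linarith), max_eq_right (b := 0) (by linarith), zero_smul]

lemma Qmap_h2 {k : ℕ} (x : ℝ × (Fin k → ℝ)) (hx : ‖x‖ = 1) (t : ℝ) (ht0 : 0 ≤ t) (ht1 : t ≤ 1)
    (c : ℝ) (hc : 0 < c) : (1 - t) • Qmap x + (t * c) • x ≠ 0 := by
  obtain ⟨s, y⟩ := x
  intro h
  have htc : 0 ≤ t * c := by positivity
  unfold Qmap at h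
  simp only [Prod.smul_mk, Prod.mk_add_mk, Prod.mk_eq_zero, smul_smul, ← add_smul, smul_eq_mul] at h
  obtain ⟨h1, h2⟩ := h
  rcases smul_eq_zero.1 h2 with h | h
  · have hm : 0 ≤ max (1 - 2 * max ‖y‖ ((s + 1) / 2)) 0 := le_max_right _ _
    have hp := mul_nonneg (sub_nonneg.2 ht1) hm
    have ht : t * c = 0 := by linarith
    have ht : t = 0 := by
      rcases mul_eq_zero.1 ht with h | h
      · exact h
      · exact absurd h hc.ne'
    subst ht
    have hm0 : max (1 - 2 * max ‖y‖ ((s + 1) / 2)) 0 = 0 := by linarith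
    have := max_eq_right_iff.1 hm0
    rw [min_eq_right (by linarith)] at h1
    norm_num at h1
  · subst h
    rw [Prod.norm_mk, norm_zero, max_eq_left (norm_nonneg _), Real.norm_eq_abs] at hx
    rw [norm_zero] at h1
    have hpos : 0 < (1 - t) + t * c := by
      rcases eq_or_lt_of_le ht0 with h | h
      · rw [← h]; norm_num
      · have : 0 < t * c := by positivity
        linarith
    rcases (abs_eq zero_le_one).1 hx with h | h
    · subst h; norm_num at h1; linarith
    · subst h; norm_num at h1; linarith

lemma Pmap_bdd {k : ℕ} (y : Fin k → ℝ) : ‖Pmap y‖ ≤ 1 := by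
  unfold Pmap
  rw [Prod.norm_mk, norm_smul]
  have := norm_nonneg y
  refine max_le ?_ ?_
  · rw [Real.norm_eq_abs, abs_le]
    exact ⟨le_min (by linarith) (by norm_num), min_le_right _ _⟩
  · rcases le_total (1 - 2 * ‖y‖) 0 with h | h
    · rw [max_eq_right h]; simp
    · rw [max_eq_left h, Real.norm_eq_abs, abs_of_nonneg h]
      nlinarith

lemma gordan {V : Type*} [AddCommGroup V] [Module ℝ V] {ι : Type*} [Fintype ι]
    (γ : ι → V →ₗ[ℝ] ℝ) (h : ¬ ∃ x, ∀ j, 0 < γ j x) :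
    ∃ lam : ι → ℝ, (∀ j, 0 ≤ lam j) ∧ (∃ j, 0 < lam j) ∧ ∀ x, ∑ j, lam j * γ j x = 0 := by
  classical
  let R : Submodule ℝ (ι → ℝ) := LinearMap.range (LinearMap.pi γ)
  have hO : IsOpen (Set.univ.pi fun _ : ι => Set.Ioi (0 : ℝ)) :=
    isOpen_set_pi Set.finite_univ fun _ _ => isOpen_Ioi
  have hOc : Convex ℝ (Set.univ.pi fun _ : ι => Set.Ioi (0 : ℝ)) :=
    convex_pi fun _ _ => convex_Ioi 0
  obtain ⟨f, u, hf1, hf2⟩ := geometric_hahn_banach_open hOc hO R.convex (by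
    rw [Set.disjoint_left]
    rintro y hy ⟨x, rfl⟩
    exact h ⟨x, fun j => hy j trivial⟩)
  have hu : u ≤ 0 := by simpa using hf2 0 R.zero_mem
  have hfR : ∀ y ∈ R, f y = 0 := by
    intro y hy
    by_contra hne
    have := hf2 (((u - 1) / f y) • y) (R.smul_mem _ hy)
    rw [map_smul, smul_eq_mul, div_mul_cancel₀ _ hne] at this
    linarith
  have hfO : ∀ y : ι → ℝ, (∀ j, 0 < y j) → f y < 0 := fun y hy =>
    lt_of_lt_of_le (hf1 y fun j _ => hy j) hu
  have hexp : ∀ y : ι → ℝ, f y = ∑ j, y j * f (Pi.single j 1) := by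
    intro y
    conv_lhs => rw [pi_eq_sum_univ' y]
    rw [map_sum]
    refine Finset.sum_congr rfl fun j _ => ?_
    rw [map_smul, smul_eq_mul]
  have hle : ∀ j, f (Pi.single j 1) ≤ 0 := by
    intro j
    by_contra hp
    push Not at hp
    have h1 := hfO 1 (fun _ => by simp)
    have := hfO (Pi.single j 1 + (f (Pi.single j 1) / (2 * (- f 1))) • (1 : ι → ℝ)) (fun i => by
      have : 0 < f (Pi.single j 1) / (2 * (- f 1)) := div_pos hp (by linarith)
      have h2 : (0 : ℝ) ≤ (Pi.single j 1 : ι → ℝ) i := by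
        rw [Pi.single_apply]; split_ifs <;> norm_num
      simp only [Pi.add_apply, Pi.smul_apply, Pi.one_apply, smul_eq_mul, mul_one]
      linarith)
    rw [map_add, map_smul, smul_eq_mul] at this
    have e : f (Pi.single j 1) / (2 * (- f 1)) * f 1 = - f (Pi.single j 1) / 2 := by
      have := h1.ne
      field_simp
    rw [e] at this
    linarith
  refine ⟨fun j => - f (Pi.single j 1), fun j => by linarith [hle j], ?_, fun x => ?_⟩
  · by_contra hcon
    push Not at hcon
    have h1 := hfO 1 (fun _ => by simp)
    rw [hexp] at h1
    have : 0 ≤ ∑ j, (1 : ι → ℝ) j * f (Pi.single j 1) :=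
      Finset.sum_nonneg fun j _ => by simpa using hcon j
    linarith
  · have := hfR _ (LinearMap.mem_range_self (LinearMap.pi γ) x)
    rw [hexp] at this
    rw [← neg_eq_zero, ← Finset.sum_neg_distrib, ← this]
    refine Finset.sum_congr rfl fun j _ => ?_
    simp
    ring

lemma circuit {V : Type*} [AddCommGroup V] [Module ℝ V] {ι : Type*} [DecidableEq ι]
    (γ : ι → V →ₗ[ℝ] ℝ) (J : Finset ι) (h : ¬ ∃ x, ∀ j ∈ J, 0 < γ j x) :
    ∃ C ⊆ J, (¬ ∃ x, ∀ j ∈ C, 0 < γ j x) ∧ ∃ lam : C → ℝ, (∀ j, 0 < lam j) ∧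
      (∀ x, ∑ j, lam j * γ j x = 0) ∧
      ∀ μ : C → ℝ, (∀ x, ∑ j, μ j * γ j x = 0) → ∃ t, ∀ j, μ j = t * lam j := by
  obtain ⟨C, hCJ, hC⟩ := exists_minimal_le_of_wellFoundedLT
    (fun C : Finset ι => ¬ ∃ x, ∀ j ∈ C, 0 < γ j x) J h
  refine ⟨C, hCJ, hC.prop, ?_⟩
  have key : ∀ μ : C → ℝ, (∀ j, 0 ≤ μ j) → (∀ x, ∑ j, μ j * γ j x = 0) → (∃ j, μ j = 0) →
      ∀ j, μ j = 0 := by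
    rintro μ hμ hs ⟨j₀, hj₀⟩ j
    have : ∃ x, ∀ j ∈ C.erase j₀, 0 < γ j x := by
      by_contra hcon
      have := hC.le_of_le hcon (Finset.erase_subset _ _)
      exact absurd (this j₀.2) (by simp)
    obtain ⟨x, hx⟩ := this
    have hnn : ∀ j ∈ (Finset.univ : Finset C), 0 ≤ μ j * γ j x := by
      intro j _
      by_cases hj : j = j₀
      · rw [hj, hj₀, zero_mul]
      · exact mul_nonneg (hμ j) (hx j (Finset.mem_erase.2 ⟨fun h => hj (Subtype.ext h), j.2⟩)).le
    have := (Finset.sum_eq_zero_iff_of_nonneg hnn).1 (hs x) j (Finset.mem_univ _)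
    by_cases hj : j = j₀
    · rw [hj, hj₀]
    · rcases mul_eq_zero.1 this with h | h
      · exact h
      · exact absurd h (hx j (Finset.mem_erase.2 ⟨fun h => hj (Subtype.ext h), j.2⟩)).ne'
  obtain ⟨lam, h0, ⟨j₁, h1⟩, h2⟩ := gordan (fun j : C => γ j) (by
    rintro ⟨x, hx⟩
    exact hC.prop ⟨x, fun j hj => hx ⟨j, hj⟩⟩)
  have hpos : ∀ j, 0 < lam j := by
    intro j
    refine lt_of_le_of_ne (h0 j) fun hj => ?_
    exact h1.ne' (key lam h0 h2 ⟨j, hj.symm⟩ j₁)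
  refine ⟨lam, hpos, h2, fun μ hμ => ?_⟩
  obtain ⟨j₀, -, hmin⟩ := Finset.exists_min_image Finset.univ (fun j => μ j / lam j)
    ⟨j₁, Finset.mem_univ _⟩
  refine ⟨μ j₀ / lam j₀, fun j => ?_⟩
  have := key (fun j => μ j - μ j₀ / lam j₀ * lam j) (fun j => by
    have := hmin j (Finset.mem_univ _)
    rw [le_div_iff₀ (hpos j)] at this
    linarith) (fun x => by
      have e : ∀ j : C, (μ j - μ j₀ / lam j₀ * lam j) * γ j x
        = μ j * γ j x - μ j₀ / lam j₀ * (lam j * γ j x) := fun j => by ring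
      simp_rw [e]
      rw [Finset.sum_sub_distrib, ← Finset.mul_sum, hμ, h2]; simp)
    ⟨j₀, by rw [div_mul_cancel₀ _ (hpos j₀).ne', sub_self]⟩ j
  linarith

lemma circuit_model {V W : Type*} [AddCommGroup V] [Module ℝ V] [FiniteDimensional ℝ V]
    [AddCommGroup W] [Module ℝ W] [FiniteDimensional ℝ W]
    {C : Type*} [Fintype C] [Nonempty C] (γ : C → V →ₗ[ℝ] ℝ) (lam : C → ℝ)
    (hpos : ∀ j, 0 < lam j) (hs : ∀ x, ∑ j, lam j * γ j x = 0)
    (hu : ∀ μ : C → ℝ, (∀ x, ∑ j, μ j * γ j x = 0) → ∃ t, ∀ j, μ j = t * lam j)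
    (hdim : Module.finrank ℝ W + Module.finrank ℝ (⨅ j, LinearMap.ker (γ j) : Submodule ℝ V)
      = Module.finrank ℝ V)
    (w₀ : W) (hw₀ : w₀ ≠ 0) (a : V) (ha : ∃ j, γ j a ≠ 0) :
    ∃ (L : W →ₗ[ℝ] (C → ℝ)) (π : (C → ℝ) →ₗ[ℝ] W) (s : W →ₗ[ℝ] V),
      (∀ w, π (L w) = w) ∧ (∀ θ, π θ = 0 → ∀ i j, θ i = θ j) ∧ (∀ w, ∑ j, L w j = 0) ∧
      (∀ w j, L w j = lam j * γ j (s w)) ∧ ∀ j, γ j (s w₀) = γ j a := by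
  classical
  let β : V →ₗ[ℝ] (C → ℝ) := LinearMap.pi fun j => lam j • γ j
  have hβ : ∀ x j, β x j = lam j * γ j x := fun x j => rfl
  let R := LinearMap.range β
  have hker : LinearMap.ker β = ⨅ j, LinearMap.ker (γ j) := by
    ext x
    simp only [LinearMap.mem_ker, Submodule.mem_iInf]
    constructor
    · intro h j
      have := congrFun h j
      rw [hβ] at this
      exact (mul_eq_zero.1 this).resolve_left (hpos j).ne'
    · intro h
      ext j
      rw [hβ, h j, mul_zero]; rfl
  have hrank : Module.finrank ℝ W = Module.finrank ℝ R := by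
    have := LinearMap.finrank_range_add_finrank_ker β
    rw [hker] at this
    simp only [R]
    omega
  have hR : ∀ θ : C → ℝ, ∑ j, θ j = 0 → θ ∈ R := by
    intro θ hθ
    by_contra hn
    obtain ⟨f, hf, hRf⟩ := Submodule.exists_le_ker_of_notMem hn
    have hexp : ∀ y : C → ℝ, f y = ∑ j, y j * f (Pi.single j 1) := by
      intro y
      conv_lhs => rw [pi_eq_sum_univ' y]
      rw [map_sum]
      refine Finset.sum_congr rfl fun j _ => ?_
      rw [map_smul, smul_eq_mul]
    obtain ⟨t, ht⟩ := hu (fun j => f (Pi.single j 1) * lam j) (fun x => by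
      have h := LinearMap.mem_ker.1 (hRf (LinearMap.mem_range_self β x))
      rw [hexp] at h
      rw [← h]
      refine Finset.sum_congr rfl fun j _ => ?_
      rw [hβ]; ring)
    have ht' : ∀ j, f (Pi.single j 1) = t := fun j => mul_right_cancel₀ (hpos j).ne' (ht j)
    apply hf
    rw [hexp]
    simp_rw [ht']
    rw [← Finset.sum_mul, hθ, zero_mul]
  have hRs : ∀ θ ∈ R, ∑ j, θ j = 0 := by
    rintro _ ⟨x, rfl⟩
    exact hs x
  let e₀ : W ≃ₗ[ℝ] R := LinearEquiv.ofFinrankEq _ _ hrank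
  have hba : (⟨β a, LinearMap.mem_range_self β a⟩ : R) ≠ 0 := by
    intro h
    obtain ⟨j, hj⟩ := ha
    have := congrFun (congrArg Subtype.val h) j
    simp only [hβ] at this
    exact hj ((mul_eq_zero.1 this).resolve_left (hpos j).ne')
  obtain ⟨A, hA⟩ := SeparatingDual.exists_continuousLinearEquiv_apply_eq (R := ℝ) (V := R)
    (x := e₀ w₀) (y := ⟨β a, LinearMap.mem_range_self β a⟩)
    (by simpa using hw₀) hba
  let e : W ≃ₗ[ℝ] R := e₀.trans A.toLinearEquiv
  have he : e w₀ = ⟨β a, LinearMap.mem_range_self β a⟩ := hA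
  obtain ⟨g, hg⟩ := β.rangeRestrict.exists_rightInverse_of_surjective (LinearMap.range_rangeRestrict β)
  have hg' : ∀ r : R, β (g r) = r := fun r => congrArg Subtype.val (LinearMap.congr_fun hg r)
  let mean : (C → ℝ) →ₗ[ℝ] R :=
    { toFun := fun θ => ⟨fun j => θ j - (∑ i, θ i) / Fintype.card C, hR _ (by
        have : (Fintype.card C : ℝ) ≠ 0 := by exact_mod_cast Fintype.card_ne_zero
        rw [Finset.sum_sub_distrib, Finset.sum_const, Finset.card_univ, nsmul_eq_mul]
        field_simp; simp)⟩
      map_add' := fun θ η => by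
        ext j
        simp [Finset.sum_add_distrib]; ring
      map_smul' := fun c θ => by
        ext j
        simp [← Finset.mul_sum]; ring }
  have hmean : ∀ θ j, (mean θ : C → ℝ) j = θ j - (∑ i, θ i) / Fintype.card C := fun _ _ => rfl
  refine ⟨R.subtype ∘ₗ e.toLinearMap, e.symm.toLinearMap ∘ₗ mean, g ∘ₗ e.toLinearMap, ?_, ?_, ?_, ?_, ?_⟩
  · intro w
    have : mean (e w : C → ℝ) = e w := by
      ext j
      rw [hmean, hRs _ (e w).2]; simp
    simp [this]
  · intro θ h i j
    have h0 : mean θ = 0 := by simpa using h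
    have hi := hmean θ i
    have hj := hmean θ j
    rw [h0] at hi hj
    simp at hi hj
    linarith
  · intro w
    exact hRs _ (e w).2
  · intro w j
    have := congrFun (hg' (e w)) j
    rw [hβ] at this
    simpa using this.symm
  · intro j
    have := congrFun (hg' (e w₀)) j
    rw [he] at this
    simp only [hβ] at this
    have := mul_left_cancel₀ (hpos j).ne' this
    simpa [he] using this

lemma mem_interKer {ℓ n : ℕ} (α : Fin n → (Vsp ℓ →ₗ[ℝ] ℝ)) (I : Finset (Fin n)) (x : Vsp ℓ) :
    x ∈ interKer α I ↔ ∀ i ∈ I, α i x = 0 := by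
  simp [interKer, Submodule.mem_iInf]

lemma gap_data (ℓ n : ℕ) (α : Fin n → (Vsp ℓ →ₗ[ℝ] ℝ)) (k : ℕ)
    (ε : Fin n → ℝ) (hε : ∀ i, ε i = 1 ∨ ε i = -1)
    (hmem : ε ∈ SigmaFilt ℓ α k) (hnotmem : ε ∉ SigmaFilt ℓ α (k + 1))
    (a : Vsp ℓ) (ha : ∀ i, α i a ≠ 0) :
    ∃ (J C : Finset (Fin n)) (lam : C → ℝ)
      (L : (ℝ × (Fin k → ℝ)) →ₗ[ℝ] (C → ℝ)) (π : (C → ℝ) →ₗ[ℝ] (ℝ × (Fin k → ℝ)))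
      (s : (ℝ × (Fin k → ℝ)) →ₗ[ℝ] Vsp ℓ),
      C ⊆ J ∧ Nonempty C ∧ (∀ j, 0 < lam j) ∧
      (∀ x, ∑ j : C, lam j * (ε j * α j x) = 0) ∧
      (∀ w, π (L w) = w) ∧ (∀ θ, π θ = 0 → ∀ i j, θ i = θ j) ∧ (∀ w, ∑ j, L w j = 0) ∧
      (∀ w j, L w j = lam j * (ε j * α j (s w))) ∧
      (∀ j ∈ J, α j (s (1, 0)) = α j a) ∧
      (∀ i ∉ J, ∃ x, (∀ j ∈ J, α j x = 0) ∧ α i x ≠ 0) ∧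
      (∀ w ≠ 0, ∃ v, ∀ j ∈ J, α j (s w) = 0 → 0 < ε j * α j v) := by
  classical
  have hεne : ∀ i, ε i ≠ 0 := fun i => by rcases hε i with h | h <;> rw [h] <;> norm_num
  have hrk : Module.finrank ℝ (Vsp ℓ) = ℓ := by simp
  obtain ⟨-, hcons⟩ := hmem
  obtain ⟨I, hI1, hI2⟩ : ∃ I : Finset (Fin n),
      ℓ - Module.finrank ℝ (interKer α I) ≤ k + 1 ∧ ¬ ConsistentAt α ε I := by
    by_contra hcon
    push Not at hcon
    exact hnotmem ⟨hε, hcon⟩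
  have hI3 : ¬ ℓ - Module.finrank ℝ (interKer α I) ≤ k := fun h => hI2 (hcons I h)
  let J : Finset (Fin n) := Finset.univ.filter fun j => interKer α I ≤ LinearMap.ker (α j)
  have hJmem : ∀ j, j ∈ J ↔ interKer α I ≤ LinearMap.ker (α j) := by simp [J]
  have hIJ : I ⊆ J := fun i hi => (hJmem i).2 fun x hx => (mem_interKer α I x).1 hx i hi
  have hXJ : ∀ x, x ∈ interKer α I ↔ ∀ j ∈ J, α j x = 0 := fun x =>
    ⟨fun hx j hj => (hJmem j).1 hj hx, fun h => (mem_interKer α I x).2 fun i hi => h i (hIJ hi)⟩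
  obtain ⟨C, hCJ, hC, lam, hpos, hsum, huniq⟩ := circuit (fun j => ε j • α j) J (by
    rintro ⟨x, hx⟩
    exact hI2 ⟨x, fun j hj => hx j ((hJmem j).2 hj)⟩)
  have hCne : Nonempty C := by
    by_contra hcon
    apply hC
    exact ⟨0, fun j hj => absurd ⟨⟨j, hj⟩⟩ hcon⟩
  have hYX : interKer α I = interKer α C := by
    apply Submodule.eq_of_le_of_finrank_le
    · intro x hx
      exact (mem_interKer α C x).2 fun j hj => (hXJ x).1 hx j (hCJ hj)
    · have : ¬ ℓ - Module.finrank ℝ (interKer α C) ≤ k := by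
        intro h
        obtain ⟨x, hx⟩ := hcons C h
        exact hC ⟨x, fun j hj => hx j fun y hy => (mem_interKer α C y).1 hy j hj⟩
      omega
  have hYX' : (⨅ j : C, LinearMap.ker (ε j • α j) : Submodule ℝ (Vsp ℓ)) = interKer α I := by
    rw [hYX]
    ext x
    rw [mem_interKer]
    simp only [Submodule.mem_iInf, LinearMap.mem_ker, LinearMap.smul_apply, smul_eq_mul,
      mul_eq_zero, hεne, false_or, Subtype.forall]
  obtain ⟨L, π, s, hπL, hπ0, hLs, hLsec, hs0⟩ := circuit_model (V := Vsp ℓ) (W := ℝ × (Fin k → ℝ))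
    (fun j : C => ε j • α j) lam hpos hsum huniq (by
      rw [hYX', hrk]
      simp only [Module.finrank_prod, Module.finrank_self, Module.finrank_fin_fun]
      omega) (1, 0) (by simp) a (by
        obtain ⟨j⟩ := hCne
        exact ⟨j, mul_ne_zero (hεne j) (ha j)⟩)
  have hsX : ∀ w, s w ∈ interKer α I → w = 0 := by
    intro w hw
    have : L w = 0 := by
      ext j
      rw [hLsec]
      simp [(hXJ _).1 hw j (hCJ j.2)]
    rw [← hπL w, this, map_zero]
  refine ⟨J, C, lam, L, π, s, hCJ, hCne, hpos, hsum, hπL, hπ0, hLs, hLsec, ?_, ?_, ?_⟩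
  · have : s (1, 0) - a ∈ interKer α I := by
      rw [hYX, mem_interKer]
      intro i hi
      have := hs0 ⟨i, hi⟩
      simp only [LinearMap.smul_apply, smul_eq_mul] at this
      rw [map_sub, mul_left_cancel₀ (hεne i) this, sub_self]
    intro j hj
    have := (hXJ _).1 this j hj
    rw [map_sub] at this
    linarith
  · intro i hi
    rw [hJmem, SetLike.not_le_iff_exists] at hi
    obtain ⟨x, hx, hx'⟩ := hi
    exact ⟨x, (hXJ x).1 hx, hx'⟩
  · intro w hw
    have hlt : interKer α I < interKer α (J.filter fun j => α j (s w) = 0) := by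
      refine lt_of_le_of_ne ?_ fun heq => ?_
      · intro x hx
        exact (mem_interKer _ _ _).2 fun j hj => (hXJ x).1 hx j (Finset.mem_filter.1 hj).1
      · apply hw
        apply hsX
        rw [heq, mem_interKer]
        exact fun j hj => (Finset.mem_filter.1 hj).2
    have h1 := Submodule.finrank_lt_finrank_of_lt hlt
    obtain ⟨v, hv⟩ := hcons (J.filter fun j => α j (s w) = 0) (by omega)
    refine ⟨v, fun j hj hz => hv j fun x hx => ?_⟩
    exact (mem_interKer _ _ _).1 hx j (Finset.mem_filter.2 ⟨hj, hz⟩)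

lemma exists_loop (ℓ n : ℕ) (α : Fin n → (Vsp ℓ →ₗ[ℝ] ℝ)) (hα : ∀ i, α i ≠ 0) (k : ℕ)
    (ε : Fin n → ℝ) (a b : Vsp ℓ) (ha : ∀ i, α i a ≠ 0) (J : Finset (Fin n))
    (s : (ℝ × (Fin k → ℝ)) →ₗ[ℝ] Vsp ℓ)
    (hs : ∀ j ∈ J, α j (s (1, 0)) = α j a)
    (hJ : ∀ i ∉ J, ∃ x, (∀ j ∈ J, α j x = 0) ∧ α i x ≠ 0)
    (hcons : ∀ w ≠ 0, ∃ v, ∀ j ∈ J, α j (s w) = 0 → 0 < ε j * α j v) :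
    ∃ X v : (Fin k → ℝ) → Vsp ℓ, Continuous X ∧ Continuous v ∧
      (∀ y, ∀ j ∈ J, α j (X y) = α j (s (Pmap y))) ∧
      (∀ y i, α i (X y) = 0 → α i (v y) ≠ 0) ∧
      (∀ y, ∀ j ∈ J, α j (X y) = 0 → 0 < ε j * α j (v y)) ∧
      (∀ y, 1 ≤ ‖y‖ → X y = a ∧ v y = b) := by
  classical
  obtain ⟨c, hc⟩ := Module.Dual.exists_forall_ne_zero_of_forall_exists (K := ℝ) (M := Vsp ℓ) α
    (fun i => by
      by_contra hcon
      push Not at hcon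
      exact hα i (LinearMap.ext hcon))
  obtain ⟨q, hqJ, hq⟩ : ∃ q, (∀ j ∈ J, α j q = 0) ∧ ∀ i ∉ J, α i q ≠ 0 := by
    obtain ⟨q, hq1, hq2⟩ := Module.Dual.exists_forall_mem_ne_zero_of_forall_exists (K := ℝ)
      (⨅ j ∈ J, LinearMap.ker (α j)) (fun i : {i // i ∉ J} => α i) (fun i => by
        obtain ⟨x, hx, hx'⟩ := hJ i i.2
        exact ⟨x, by simpa [Submodule.mem_iInf] using hx, hx'⟩)
    exact ⟨q, by simpa [Submodule.mem_iInf] using hq1, fun i hi => hq2 ⟨i, hi⟩⟩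
  have hαc : ∀ i, Continuous (α i) := fun i => (α i).continuous_of_finiteDimensional
  have hsc : Continuous s := s.continuous_of_finiteDimensional
  have hK : ∀ i, ∃ K : ℝ, ∀ y : Fin k → ℝ, |α i (s (Pmap y))| < K := by
    intro i
    let f : (ℝ × (Fin k → ℝ)) →L[ℝ] ℝ := LinearMap.toContinuousLinearMap (α i ∘ₗ s)
    refine ⟨‖f‖ + 1, fun y => ?_⟩
    have h1 : |α i (s (Pmap y))| ≤ ‖f‖ * ‖Pmap y‖ := f.le_opNorm (Pmap y)
    have h2 := Pmap_bdd y
    nlinarith [norm_nonneg f]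
  choose K hK using hK
  obtain ⟨N, hN⟩ : ∃ N : ℝ, ∀ i, K i / |α i q| ≤ N := by
    obtain ⟨N, hN⟩ := (Set.finite_range fun i => K i / |α i q|).bddAbove
    exact ⟨N, fun i => hN ⟨i, rfl⟩⟩
  have hN' : ∀ i ∉ J, ∀ y : Fin k → ℝ, α i (s (Pmap y)) + N * α i q ≠ 0 := by
    intro i hi y h
    have h1 := hK i y
    have h2 := hN i
    have h3 : 0 < |α i q| := abs_pos.2 (hq i hi)
    rw [div_le_iff₀ h3] at h2
    have h4 : |α i (s (Pmap y))| = |N| * |α i q| := by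
      rw [← abs_mul, ← abs_neg]; congr 1; linarith
    nlinarith [le_abs_self N]
  let τ : (Fin k → ℝ) → ℝ := fun y => min (max 0 (2 * ‖y‖ - 1)) 1
  have hτ : Continuous τ := by simp only [τ]; fun_prop
  let X : (Fin k → ℝ) → Vsp ℓ := fun y =>
    s (Pmap y) + ((1 - τ y) • (N • q) + τ y • (a - s (1, 0)))
  have hX : Continuous X := by
    have := Pmap_cont (k := k)
    simp only [X]; fun_prop
  have hXJ : ∀ y, ∀ j ∈ J, α j (X y) = α j (s (Pmap y)) := by
    intro y j hj
    simp [X, hqJ j hj, hs j hj]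
  have hX1 : ∀ y, 1 ≤ ‖y‖ → X y = a := by
    intro y hy
    have : τ y = 1 := by
      simp only [τ]; rw [min_eq_right]
      exact le_max_of_le_right (by linarith)
    simp only [X, this, Pmap_far y (by linarith)]
    simp
  let η : Fin n → ℝ := fun i => if i ∈ J then ε i else α i c
  let T : (Fin k → ℝ) → Set (Vsp ℓ) := fun y =>
    {v | (∀ i, α i (X y) = 0 → 0 < η i * α i v) ∧ (1 ≤ ‖y‖ → v = b)}
  have hT : ∀ y, Convex ℝ (T y) := by
    intro y v hv w hw p r hp hr hpr
    refine ⟨fun i hi => ?_, fun h => ?_⟩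
    · have h1 := hv.1 i hi
      have h2 := hw.1 i hi
      rw [map_add, map_smul, map_smul, smul_eq_mul, smul_eq_mul]
      have e : η i * (p * α i v + r * α i w) = p * (η i * α i v) + r * (η i * α i w) := by ring
      rw [e]
      rcases eq_or_lt_of_le hp with h | h
      · have : r = 1 := by linarith
        rw [← h, this]; linarith
      · have := mul_pos h h1
        have := mul_nonneg hr h2.le
        linarith
    · rw [hv.2 h, hw.2 h, ← add_smul, hpr, one_smul]
  have hpt : ∀ y, ∃ v, v ∈ T y := by
    intro y
    rcases le_or_gt 1 ‖y‖ with h1 | h1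
    · refine ⟨b, fun i hi => ?_, fun _ => rfl⟩
      rw [hX1 y h1] at hi
      exact absurd hi (ha i)
    · rcases le_or_gt ‖y‖ (1 / 2) with h2 | h2
      · obtain ⟨v, hv⟩ := hcons (Pmap y) (Pmap_ne y)
        refine ⟨v, fun i hi => ?_, fun h => absurd h (not_le.2 h1)⟩
        have hτ0 : τ y = 0 := by
          simp only [τ]
          rw [max_eq_left (by linarith), min_eq_left zero_le_one]
        by_cases hij : i ∈ J
        · simp only [η, if_pos hij]
          exact hv i hij (by rw [← hXJ y i hij]; exact hi)
        · exfalso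
          apply hN' i hij y
          simpa [X, hτ0] using hi
      · refine ⟨c, fun i hi => ?_, fun h => absurd h (not_le.2 h1)⟩
        by_cases hij : i ∈ J
        · rw [hXJ y i hij, Pmap_far y h2.le, hs i hij] at hi
          exact absurd hi (ha i)
        · simp only [η, if_neg hij]
          exact mul_self_pos.2 (hc i)
  obtain ⟨v, hv⟩ := exists_continuous_forall_mem_convex_of_local_const hT (fun y => by
    obtain ⟨v, hv⟩ := hpt y
    refine ⟨v, ?_⟩
    have e1 : ∀ i, ∀ᶠ z in nhds y, α i (X z) = 0 → 0 < η i * α i v := by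
      intro i
      by_cases hi : α i (X y) = 0
      · exact Filter.Eventually.of_forall fun z _ => hv.1 i hi
      · have : ∀ᶠ z in nhds y, α i (X z) ≠ 0 :=
          ((hαc i).comp hX).continuousAt.eventually_ne hi
        filter_upwards [this] with z hz h using absurd h hz
    have e2 : ∀ᶠ z in nhds y, 1 ≤ ‖z‖ → v = b := by
      rcases le_or_gt 1 ‖y‖ with h1 | h1
      · exact Filter.Eventually.of_forall fun z _ => hv.2 h1
      · have : ∀ᶠ z in nhds y, ‖z‖ < 1 := continuous_norm.continuousAt.eventually_lt_const h1
        filter_upwards [this] with z hz h using absurd h (not_le.2 hz)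
    filter_upwards [Filter.eventually_all.2 e1, e2] with z h1 h2 using ⟨h1, h2⟩)
  refine ⟨X, v, hX, v.continuous, hXJ, fun y i hi h => ?_, fun y j hj h => ?_, fun y hy => ?_⟩
  · have := (hv y).1 i hi
    rw [h] at this
    simp at this
  · have := (hv y).1 j h
    simpa [η, hj] using this
  · exact ⟨hX1 y hy, (hv y).2 hy⟩

lemma cLin_re {ℓ : ℕ} (α : Vsp ℓ →ₗ[ℝ] ℝ) (z : Fin ℓ → ℂ) :
    (cLin α z).re = α (WithLp.toLp 2 (fun j => (z j).re)) := by simp [cLin]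

lemma cLin_im {ℓ : ℕ} (α : Vsp ℓ →ₗ[ℝ] ℝ) (z : Fin ℓ → ℂ) :
    (cLin α z).im = α (WithLp.toLp 2 (fun j => (z j).im)) := by simp [cLin]

lemma cLin_smul {ℓ : ℕ} (α : Vsp ℓ →ₗ[ℝ] ℝ) (w : ℂ) (z : Fin ℓ → ℂ) :
    cLin α (w • z) = w * cLin α z := by
  have e1 : (WithLp.toLp 2 (fun j => ((w • z) j).re) : Vsp ℓ)
      = w.re • WithLp.toLp 2 (fun j => (z j).re) - w.im • WithLp.toLp 2 (fun j => (z j).im) := by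
    ext j; simp
  have e2 : (WithLp.toLp 2 (fun j => ((w • z) j).im) : Vsp ℓ)
      = w.re • WithLp.toLp 2 (fun j => (z j).im) + w.im • WithLp.toLp 2 (fun j => (z j).re) := by
    ext j; simp
  apply Complex.ext
  · rw [cLin_re, e1, Complex.mul_re, cLin_re, cLin_im]; simp
  · rw [cLin_im, e2, Complex.mul_im, cLin_re, cLin_im]; simp

lemma cLin_cplx {ℓ : ℕ} (α : Vsp ℓ →ₗ[ℝ] ℝ) (x v : Vsp ℓ) :
    (cLin α (cplx x v)).re = α x ∧ (cLin α (cplx x v)).im = α v := by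
  rw [cLin_re, cLin_im]
  constructor
  · congr 1; ext j; simp [cplx]
  · congr 1; ext j; simp [cplx]

lemma cLin_cont {ℓ : ℕ} (α : Vsp ℓ →ₗ[ℝ] ℝ) : Continuous (cLin α) := by
  have h : Continuous α := α.continuous_of_finiteDimensional
  have h1 : Continuous fun z : Fin ℓ → ℂ => (WithLp.toLp 2 (fun j => (z j).re) : Vsp ℓ) :=
    (PiLp.continuous_toLp 2 _).comp (by fun_prop)
  have h2 : Continuous fun z : Fin ℓ → ℂ => (WithLp.toLp 2 (fun j => (z j).im) : Vsp ℓ) :=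
    (PiLp.continuous_toLp 2 _).comp (by fun_prop)
  unfold cLin
  fun_prop

lemma cplx_cont {ℓ : ℕ} : Continuous fun p : Vsp ℓ × Vsp ℓ => cplx p.1 p.2 := by
  unfold cplx
  fun_prop

/-- Coordinates from the real line to the unit interval. -/
noncomputable def toI (u : ℝ) : unitInterval := Set.projIcc 0 1 zero_le_one ((u + 1) / 2)

lemma toI_cont : Continuous toI := by unfold toI; exact continuous_projIcc.comp (by fun_prop)

lemma toI_val (u : ℝ) (h : |u| ≤ 1) : 2 * (toI u : ℝ) - 1 = u := by
  rw [abs_le] at h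
  unfold toI
  rw [Set.projIcc_of_mem zero_le_one (x := (u + 1) / 2) ⟨by linarith, by linarith⟩]
  ring

lemma toI_one : toI 1 = 1 := by
  unfold toI; norm_num

lemma toI_neg : toI (-1) = 0 := by
  unfold toI; norm_num

theorem gap_aux (ℓ n : ℕ)
    (α : Fin n → (Vsp ℓ →ₗ[ℝ] ℝ))
    (hα : ∀ i, α i ≠ 0)
    (k : ℕ) (hk : 2 ≤ k)
    (ε : Fin n → ℝ) (hε : ∀ i, ε i = 1 ∨ ε i = -1)
    (hmem : ε ∈ SigmaFilt ℓ α k) (hnotmem : ε ∉ SigmaFilt ℓ α (k + 1)) :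
    ∀ x₀ : MA α, Nontrivial (HomotopyGroup.Pi k (MA α) x₀) := by
  intro x₀
  have hεne : ∀ i, ε i ≠ 0 := fun i => by rcases hε i with h | h <;> rw [h] <;> norm_num
  -- a rotation making the real part generic
  obtain ⟨w, hw0, hwa⟩ : ∃ w : ℂ, w ≠ 0 ∧ ∀ i, (w * cLin (α i) x₀).re ≠ 0 := by
    let d : Option (Fin n) → ℂ := fun o => o.elim 1 fun i => cLin (α i) x₀
    have hd : ∀ o, d o ≠ 0 := by
      intro o
      cases o with
      | none => exact one_ne_zero
      | some i => exact x₀.2 i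
    obtain ⟨w, hw⟩ := Module.Dual.exists_forall_ne_zero_of_forall_exists (K := ℝ) (M := ℂ)
      (fun o => Complex.reLm ∘ₗ LinearMap.mulRight ℝ (d o)) (fun o => by
        refine ⟨(d o)⁻¹, ?_⟩
        simp [hd o])
    refine ⟨w, ?_, fun i => by simpa [d] using hw (some i)⟩
    rintro rfl
    exact hw none (by simp)
  let a : Vsp ℓ := WithLp.toLp 2 (fun j => ((w • (x₀ : Fin ℓ → ℂ)) j).re)
  let b : Vsp ℓ := WithLp.toLp 2 (fun j => ((w • (x₀ : Fin ℓ → ℂ)) j).im)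
  have hab : cplx a b = w • (x₀ : Fin ℓ → ℂ) := by
    ext j
    simp only [cplx, a, b]
    rw [mul_comm, Complex.re_add_im]
  have ha : ∀ i, α i a ≠ 0 := by
    intro i
    have := hwa i
    rwa [← cLin_smul, cLin_re] at this
  obtain ⟨J, C, lam, L, π, s, hCJ, hCne, hpos, hsum, hπL, hπ0, hLs, hLsec, hs0, hJ, hcons⟩ :=
    gap_data ℓ n α k ε hε hmem hnotmem a ha
  obtain ⟨X, v, hX, hv, hXJ, hXv, hXε, hXb⟩ := exists_loop ℓ n α hα k ε a b ha J s hs0 hJ hcons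
  -- the loop
  let ψ : (Fin k → unitInterval) → (Fin k → ℝ) := fun t i => 2 * (t i : ℝ) - 1
  have hψ : Continuous ψ := by simp only [ψ]; fun_prop
  have hψb : ∀ t ∈ Cube.boundary (Fin k), 1 ≤ ‖ψ t‖ := by
    rintro t ⟨i, hi⟩
    refine le_trans ?_ (norm_le_pi_norm (ψ t) i)
    rcases hi with h | h <;> simp [ψ, h] <;> norm_num
  have hgmem : ∀ t, w⁻¹ • cplx (X (ψ t)) (v (ψ t)) ∈ MA α := by
    intro t i h
    rw [cLin_smul] at h
    have h0 := (mul_eq_zero.1 h).resolve_left (inv_ne_zero hw0)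
    obtain ⟨h1, h2⟩ := cLin_cplx (α i) (X (ψ t)) (v (ψ t))
    rw [h0] at h1 h2
    exact hXv _ i h1.symm h2.symm
  let g : GenLoop (Fin k) (MA α) x₀ := ⟨⟨fun t => ⟨w⁻¹ • cplx (X (ψ t)) (v (ψ t)), hgmem t⟩, by
      have := (cplx_cont (ℓ := ℓ)).comp ((hX.comp hψ).prodMk (hv.comp hψ))
      exact Continuous.subtype_mk (this.const_smul w⁻¹) _⟩, by
    intro t ht
    apply Subtype.ext
    obtain ⟨h1, h2⟩ := hXb _ (hψb t ht)
    show w⁻¹ • cplx (X (ψ t)) (v (ψ t)) = _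
    rw [h1, h2, hab, inv_smul_smul₀ hw0]⟩
  have hg : ∀ t, (g.1 t : Fin ℓ → ℂ) = w⁻¹ • cplx (X (ψ t)) (v (ψ t)) := fun t => rfl
  refine ⟨⟨(⟦g⟧ : Quotient (GenLoop.Homotopic.setoid (Fin k) x₀)),
    (⟦GenLoop.const⟧ : Quotient (GenLoop.Homotopic.setoid (Fin k) x₀)), fun heq => ?_⟩⟩
  obtain ⟨H⟩ : GenLoop.Homotopic g GenLoop.const := Quotient.exact heq
  let Z : (ℝ × (Fin k → ℝ)) → (Fin ℓ → ℂ) := fun x =>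
    w • (H (toI x.1, fun i => toI (x.2 i)) : Fin ℓ → ℂ)
  have hZc : Continuous Z := by
    have h1 : Continuous fun x : ℝ × (Fin k → ℝ) => (toI x.1, fun i => toI (x.2 i)) := by
      have := toI_cont
      fun_prop
    have h2 := continuous_subtype_val.comp (H.continuous.comp h1)
    exact h2.const_smul w
  have hZ0 : ∀ x i, cLin (α i) (Z x) ≠ 0 := by
    intro x i
    rw [cLin_smul]
    exact mul_ne_zero hw0 ((H (toI x.1, fun i => toI (x.2 i))).2 i)
  have hZs : ∀ x, ‖x‖ = 1 → ∃ A B, Z x = cplx A B ∧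
      (∀ j : C, L (Qmap x) j = lam j * (ε j * α j A)) ∧
      ∀ j : C, α j A = 0 → 0 < ε j * α j B := by
    intro x hx
    have hx1 : |x.1| ≤ 1 := by rw [← hx]; exact norm_fst_le x
    have hx2 : ‖x.2‖ ≤ 1 := by rw [← hx]; exact norm_snd_le x
    have hψx : ψ (fun i => toI (x.2 i)) = x.2 := by
      ext i
      exact toI_val _ ((norm_le_pi_norm x.2 i).trans hx2)
    have base : (H (toI x.1, fun i => toI (x.2 i)) : Fin ℓ → ℂ) = x₀ → (‖x.2‖ = 1 ∨ x.1 = 1) →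
        ∃ A B, Z x = cplx A B ∧
      (∀ j : C, L (Qmap x) j = lam j * (ε j * α j A)) ∧
      ∀ j : C, α j A = 0 → 0 < ε j * α j B := by
      intro h h'
      refine ⟨a, b, ?_, fun j => ?_, fun j hj => absurd hj (ha j)⟩
      · simp only [Z]; rw [h, hab]
      · rw [Qmap_other x h', hLsec, hs0 j (hCJ j.2)]
    by_cases hy : ‖x.2‖ = 1
    · refine base ?_ (Or.inl hy)
      have hbd : (fun i => toI (x.2 i)) ∈ Cube.boundary (Fin k) := by
        by_contra hcon
        have : ‖x.2‖ < 1 := by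
          rw [pi_norm_lt_iff one_pos]
          intro i
          refine lt_of_le_of_ne ((norm_le_pi_norm x.2 i).trans hx2) fun h => hcon ⟨i, ?_⟩
          rw [Real.norm_eq_abs] at h
          rcases (abs_eq zero_le_one).1 h with h | h
          · right; simp only [h, toI_one]
          · left; simp only [h, toI_neg]
        exact this.ne hy
      rw [H.eq_fst _ hbd]
      exact congrArg Subtype.val (g.2 _ hbd)
    · have hs1 : |x.1| = 1 := by
        refine le_antisymm hx1 ?_
        by_contra hcon
        push Not at hcon
        have : ‖x‖ < 1 := by
          rw [Prod.norm_def]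
          exact max_lt hcon (lt_of_le_of_ne hx2 hy)
        exact this.ne hx
      rcases (abs_eq zero_le_one).1 hs1 with h | h
      · refine base ?_ (Or.inr h)
        rw [h, toI_one, H.apply_one]
        rfl
      · refine ⟨X x.2, v x.2, ?_, fun j => ?_, fun j hj => hXε _ j (hCJ j.2) hj⟩
        · simp only [Z]
          rw [h, toI_neg, H.apply_zero, hg, hψx, smul_inv_smul₀ hw0]
        · rw [Qmap_bot x h, hLsec, hXJ _ j (hCJ j.2)]
  let ω : (ℝ × (Fin k → ℝ)) → C → ℂ := fun x j =>
    -Complex.I * ((lam j * ε j : ℝ) * cLin (α j) (Z x))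
  have hωre : ∀ x j, (ω x j).re = lam j * (ε j * (cLin (α j) (Z x)).im) := by
    intro x j; simp only [ω]; simp [-Complex.ofReal_mul, Complex.re_ofReal_mul, Complex.im_ofReal_mul]; ring
  have hωim : ∀ x j, (ω x j).im = - (lam j * (ε j * (cLin (α j) (Z x)).re)) := by
    intro x j; simp only [ω]; simp [-Complex.ofReal_mul, Complex.re_ofReal_mul, Complex.im_ofReal_mul]; ring
  refine core_no_filling (W := ℝ × (Fin k → ℝ)) ?_ L π hπL hπ0 hLs ω ?_ ?_ ?_ Qmap Qmap_cont
    Qmap_h2 ?_ ?_ ?_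
  · simp only [Module.finrank_prod, Module.finrank_self, Module.finrank_fin_fun]
    omega
  · intro j
    have := (cLin_cont (α j)).comp hZc
    exact continuous_const.mul (continuous_const.mul this)
  · intro x j
    refine mul_ne_zero (neg_ne_zero.2 Complex.I_ne_zero) (mul_ne_zero ?_ (hZ0 x j))
    exact_mod_cast mul_ne_zero (hpos j).ne' (hεne j)
  · intro x
    apply Complex.ext
    · rw [Complex.re_sum]
      simp_rw [hωre, cLin_im]
      exact hsum _
    · rw [Complex.im_sum]
      simp_rw [hωim, cLin_re]
      rw [Finset.sum_neg_distrib, hsum]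
      simp
  · intro x hx j hj
    obtain ⟨A, B, hAB, h1, h2⟩ := hZs x hx
    rw [hωim, hAB, (cLin_cplx _ A B).1, ← h1]
    linarith
  · intro x hx j hj
    obtain ⟨A, B, hAB, h1, h2⟩ := hZs x hx
    rw [hωim, hAB, (cLin_cplx _ A B).1, ← h1]
    linarith
  · intro x hx j hj
    obtain ⟨A, B, hAB, h1, h2⟩ := hZs x hx
    rw [hωre, hAB, (cLin_cplx _ A B).2]
    rw [h1] at hj
    have h0 := (mul_eq_zero.1 ((mul_eq_zero.1 hj).resolve_left (hpos j).ne')).resolve_left (hεne j)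
    exact mul_pos (hpos j) (h2 j h0)

end helpers

/-- A gap in the consistency filtration forces a nonvanishing homotopy group:
if some sign vector lies in `Σ_k ∖ Σ_{k+1}` with `k ≥ 2`, then `π_k(M(A)) ≠ 0`. -/
theorem gap_in_filtration_nontrivial_pi (ℓ n : ℕ)
    (α : Fin n → (Vsp ℓ →ₗ[ℝ] ℝ))
    (hα : ∀ i, α i ≠ 0)
    (hess : (⋂ i, (LinearMap.ker (α i) : Set (Vsp ℓ))) = {0})
    (k : ℕ) (hk : 2 ≤ k)
    (ε : Fin n → ℝ) (hε : ∀ i, ε i = 1 ∨ ε i = -1)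
    (hmem : ε ∈ SigmaFilt ℓ α k) (hnotmem : ε ∉ SigmaFilt ℓ α (k + 1)) :
    ∀ x₀ : MA α, Nontrivial (HomotopyGroup.Pi k (MA α) x₀) := by
  exact gap_aux ℓ n α hα k hk ε hε hmem hnotmem
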